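/- For λ a partition contained in the m-row, n-column rectangle n^m, the product of hook lengths of λ times the product of hook lengths of the complementary partition λ̄ (complement of λ in n^m) times the number of SSYT of shape λ with entries in {1,…,m} times the number of SSYT of shape λ' with entries in {1,…,n} equals the product of hook lengths of the full rectangle n^m. -/

import Mathlib

open YoungDiagram Finset

/-- The rectangular Young diagram with `m` rows and `n` columns. -/
def rect (m n : ℕ) : YoungDiagram where
  cells := Finset.range m ×ˢ Finset.range n
  isLowerSet := by
    rintro ⟨a1, a2⟩ ⟨b1, b2⟩ ⟨h1, h2⟩ hb
    simp only [Finset.coe_product, Set.mem_prod, Finset.mem_coe, Finset.mem_range] at *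
    exact ⟨lt_of_le_of_lt h1 hb.1, lt_of_le_of_lt h2 hb.2⟩

/-- The 180°-rotated complement of a Young diagram `μ` inside the rectangle with
`m` rows and `n` columns: its row lengths are `n - μ.rowLen (m-1-i)`. -/
def complement (m n : ℕ) (μ : YoungDiagram) : YoungDiagram where
  cells := (Finset.range m ×ˢ Finset.range n).filter fun p => p.2 < n - μ.rowLen (m - 1 - p.1)
  isLowerSet := by
    rintro ⟨a1, a2⟩ ⟨b1, b2⟩ ⟨h1, h2⟩ hb
    simp only [Finset.coe_filter, Set.mem_setOf_eq, Finset.mem_product, Finset.mem_range] at *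
    refine ⟨⟨lt_of_le_of_lt h1 hb.1.1, lt_of_le_of_lt h2 hb.1.2⟩, ?_⟩
    calc b2 ≤ a2 := h2
      _ < n - μ.rowLen (m - 1 - a1) := hb.2
      _ ≤ n - μ.rowLen (m - 1 - b1) :=
          Nat.sub_le_sub_left (μ.rowLen_anti _ _ (Nat.sub_le_sub_left h1 _)) n

/-- The hook length of the cell `c` in the Young diagram `μ` (arm + leg + 1). -/
def hookLength (μ : YoungDiagram) (c : ℕ × ℕ) : ℕ :=
  (μ.rowLen c.1 - c.2) + (μ.colLen c.2 - c.1) - 1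

/-- The product of all hook lengths of `μ`. -/
def hookProd (μ : YoungDiagram) : ℕ := ∏ c ∈ μ.cells, hookLength μ c

/-- The number of semistandard Young tableaux of shape `μ` with entries in `{0, …, k-1}`;
this equals `s_μ(1^k) = dim S^μ(ℂ^k)`. -/
noncomputable def ssytCount (μ : YoungDiagram) (k : ℕ) : ℕ :=
  Set.ncard {T : SemistandardYoungTableau μ | ∀ i j, (i, j) ∈ μ → T i j < k}

/-- `T : ℕ × ℕ → ℕ` is a standard Young tableau of shape `μ` (with entries `0, …, |μ|-1`):
it is a bijection from the cells of `μ` to `{0, …, |μ|-1}`, strictly increasing along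
rows and columns, and zero outside `μ`. -/
def IsSyt (μ : YoungDiagram) (T : ℕ × ℕ → ℕ) : Prop :=
  Set.BijOn T (μ.cells : Set (ℕ × ℕ)) (Finset.range μ.card : Set ℕ) ∧
  (∀ i j, (i, j + 1) ∈ μ → T (i, j) < T (i, j + 1)) ∧
  (∀ i j, (i + 1, j) ∈ μ → T (i, j) < T (i + 1, j)) ∧
  (∀ c, c ∉ μ → T c = 0)

/-- The number of standard Young tableaux of shape `μ`, i.e. `f^μ`. -/
noncomputable def sytCount (μ : YoungDiagram) : ℕ := Set.ncard {T | IsSyt μ T}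

/-!
For a diagram `μ` with at most `m` rows, let `β(μ, m)` be the set of the numbers `μ_i + (m - 1 - i)`
for `i < m`, and let `Δ` denote the product of the differences of a set of numbers. Then

* `H_μ · Δ(β(μ, m)) = ∏ x ∈ β(μ, m), x!` (Frobenius), because the hook lengths in a row of `μ`,
  together with the differences `β_i - β_k` for the rows `k` below it, are exactly `1, …, β_i`;
* `0! ⋯ (m - 1)! · s_μ(1^m) = Δ(β(μ, m))`, because removing the largest entries of a tableau leaves
  a tableau whose beta numbers interlace those of `μ`, and summing the binomial determinant
  `det (x_i choose j) = Δ(x) / (0! ⋯ (m - 1)!)` over interlacing sequences gives the determinant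
  of the next size.

Now `β(λ̄, m)` is the reflection of `β(λ, m)` in `{0, …, m + n - 1}`, so it has the same `Δ`, and it
is the complement of `β(λ', n)` there. As `H_λ = H_λ'`, multiplying Frobenius' formula for `λ̄` with
that for `λ'` gives `0! ⋯ (m + n - 1)!` for the left hand side times
`0! ⋯ (m - 1)! · 0! ⋯ (n - 1)!`. This value does not depend on `λ`, and for `λ = ∅` the left hand
side is the hook product of the rectangle.
-/

open scoped Nat

section Diagrams

variable {μ ν : YoungDiagram} {m n i j : ℕ}

lemma eq_of_rowLen_eq (h : ∀ i, μ.rowLen i = ν.rowLen i) : μ = ν :=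
  SetLike.ext fun ⟨i, j⟩ => by rw [mem_iff_lt_rowLen, mem_iff_lt_rowLen, h]

lemma rowLen_eq_of_forall_mem_iff (h : ∀ j, (i, j) ∈ μ ↔ j < n) : μ.rowLen i = n :=
  eq_of_forall_lt_iff fun j => by rw [← mem_iff_lt_rowLen, h]

lemma rowLen_le_rowLen_of_forall_mem {k : ℕ} (h : ∀ j, (i, j) ∈ μ → (k, j) ∈ ν) :
    μ.rowLen i ≤ ν.rowLen k :=
  forall_lt_iff_le.1 fun j hj => mem_iff_lt_rowLen.1 (h j (mem_iff_lt_rowLen.2 hj))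

lemma rowLen_eq_zero_iff : μ.rowLen i = 0 ↔ μ.colLen 0 ≤ i := by
  rw [← not_lt, ← mem_iff_lt_colLen, mem_iff_lt_rowLen, Nat.pos_iff_ne_zero, not_not]

lemma lt_colLen_iff_lt_rowLen : i < μ.colLen j ↔ j < μ.rowLen i := by
  rw [← mem_iff_lt_colLen, mem_iff_lt_rowLen]

lemma eq_bot_of_colLen_zero_eq_zero (h : μ.colLen 0 = 0) : μ = ⊥ :=
  eq_bot_iff.2 fun ⟨i, j⟩ hc => by
    have := (mem_iff_lt_colLen.1 hc).trans_le (μ.colLen_anti 0 j j.zero_le)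
    omega

/-- `μ_i + μ'_j - i - j - 1` is the hook length, thus positive, at the cells of `μ`, and it is
negative at all other positions. -/
lemma rowLen_add_colLen_ne (μ : YoungDiagram) (i j : ℕ) : μ.rowLen i + μ.colLen j ≠ i + j + 1 := by
  have := lt_colLen_iff_lt_rowLen (μ := μ) (i := i) (j := j)
  omega

lemma mem_rect {c : ℕ × ℕ} : c ∈ rect m n ↔ c.1 < m ∧ c.2 < n := by
  rw [← mem_cells, rect, mem_product, mem_range, mem_range]

lemma colLen_zero_le_of_le_rect (h : μ ≤ rect m n) : μ.colLen 0 ≤ m :=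
  le_of_not_gt fun hm => (mem_rect.1 (h (mem_iff_lt_colLen.2 hm))).1.false

lemma rowLen_zero_le_of_le_rect (h : μ ≤ rect m n) : μ.rowLen 0 ≤ n :=
  le_of_not_gt fun hn => (mem_rect.1 (h (mem_iff_lt_rowLen.2 hn))).2.false

lemma complement_le_rect (m n : ℕ) (μ : YoungDiagram) : complement m n μ ≤ rect m n :=
  cells_subset_iff.1 (filter_subset _ _)

lemma rowLen_complement (n : ℕ) (μ : YoungDiagram) (hi : i < m) :
    (complement m n μ).rowLen i = n - μ.rowLen (m - 1 - i) := by
  refine rowLen_eq_of_forall_mem_iff fun j => ?_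
  rw [← mem_cells]
  simp only [complement, mem_filter, mem_product, mem_range]
  omega

lemma finite_Iic_youngDiagram (μ : YoungDiagram) : (Set.Iic μ).Finite := by
  refine (μ.cells.powerset.finite_toSet.preimage (f := cells) ?_).subset ?_
  · exact fun _ _ _ _ h => YoungDiagram.ext h
  · exact fun ν hν => mem_coe.2 (mem_powerset.2 (cells_subset_iff.2 hν))

end Diagrams

section DiffProd

variable {m : ℕ}

/-- The Vandermonde product `∏_{j < i} (x_i - x_j)` of a sequence of natural numbers, taken in `ℤ`
so that the subtractions are not truncated. -/
def diffProd (x : Fin m → ℕ) : ℤ := ∏ i, ∏ j ∈ Iio i, ((x i : ℤ) - x j)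

lemma diffProd_eq_det_vandermonde (x : Fin m → ℕ) :
    diffProd x = (Matrix.vandermonde fun i => (x i : ℤ)).det := by
  rw [Matrix.det_vandermonde, diffProd]
  exact prod_comm' (by simp)

lemma diffProd_eq_of_add_rev_eq {x y : Fin m → ℕ} {N : ℕ} (h : ∀ i, y i + x i.rev = N) :
    diffProd y = diffProd x := by
  have hsub (i j) : (y i : ℤ) - y j = x j.rev - x i.rev := by
    have hi := h i
    have hj := h j
    omega
  calc diffProd y
      = ∏ i, ∏ j ∈ Iio i, ((x (Fin.rev j) : ℤ) - x (Fin.rev i)) := by simp only [diffProd, hsub]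
    _ = ∏ j, ∏ i ∈ Ioi j, ((x (Fin.rev j) : ℤ) - x (Fin.rev i)) :=
      prod_comm' fun i j => by simp only [mem_univ, mem_Iio, mem_Ioi, true_and, and_true]
    _ = diffProd x := by
      refine Fintype.prod_equiv Fin.revPerm _ _ fun j => ?_
      refine prod_equiv Fin.revPerm (fun i => ?_) fun i _ => rfl
      rw [mem_Ioi, mem_Iio, Fin.revPerm_apply, Fin.revPerm_apply, Fin.rev_lt_rev]

lemma prod_factorial_mul_det_choose (x : Fin m → ℕ) :
    (∏ i ∈ range m, (i ! : ℤ)) * (Matrix.of fun i j : Fin m => ((x i).choose j : ℤ)).det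
      = diffProd x := by
  rw [diffProd_eq_det_vandermonde, Matrix.det_eval_matrixOfPolynomials_eq_det_vandermonde _
    (fun i : Fin m => descPochhammer ℤ i) (fun i => descPochhammer_natDegree ℤ i)
    (fun i => monic_descPochhammer ℤ i), ← Fin.prod_univ_eq_prod_range, ← Matrix.det_mul_row]
  congr 1
  ext i j
  simp [descPochhammer_eval_eq_descFactorial, Nat.descFactorial_eq_factorial_mul_choose]

lemma sum_Ico_choose {a b : ℕ} (h : a ≤ b) (k : ℕ) :
    ∑ t ∈ Ico a b, (t.choose k : ℤ) = b.choose (k + 1) - a.choose (k + 1) := by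
  rw [← sum_Ico_sub (fun t => (t.choose (k + 1) : ℤ)) h]
  exact sum_congr rfl fun t _ => by rw [Nat.choose_succ_succ']; push_cast; ring

lemma det_choose_eq_sum_det_choose {x : Fin (m + 1) → ℕ} (hx : Monotone x) :
    (Matrix.of fun i j : Fin (m + 1) => ((x i).choose j : ℤ)).det
      = ∑ y ∈ Fintype.piFinset fun i : Fin m => Ico (x i.castSucc) (x i.succ),
          (Matrix.of fun i j : Fin m => ((y i).choose j : ℤ)).det := by
  let B : Matrix (Fin (m + 1)) (Fin (m + 1)) ℤ := Matrix.of fun i j =>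
    Fin.cases ((x 0).choose j : ℤ)
      (fun i : Fin m => ((x i.succ).choose j : ℤ) - (x i.castSucc).choose j) i
  have hrows : (Matrix.of fun i j : Fin (m + 1) => ((x i).choose j : ℤ)).det = B.det :=
    Matrix.det_eq_of_forall_row_eq_smul_add_pred (fun _ => 1) (by simp [B]) (by simp [B])
  have hcol : B.det = (B.submatrix Fin.succ Fin.succ).det := by
    simp [Matrix.det_succ_column_zero, Fin.sum_univ_succ, B, Fin.succAbove_zero]
  have hsum : B.submatrix Fin.succ Fin.succ
      = fun i => ∑ t ∈ Ico (x i.castSucc) (x i.succ), fun j : Fin m => (t.choose j : ℤ) := by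
    ext i j
    simp [B, sum_Ico_choose (hx i.castSucc_le_succ)]
  rw [hrows, hcol, hsum]
  exact Matrix.detRowAlternating.toMultilinearMap.map_sum_finset
    (fun (_ : Fin m) (t : ℕ) (j : Fin m) => (t.choose j : ℤ)) _

lemma factorial_mul_sum_diffProd {x : Fin (m + 1) → ℕ} (hx : Monotone x) :
    (m ! : ℤ) * ∑ y ∈ Fintype.piFinset fun i : Fin m => Ico (x i.castSucc) (x i.succ), diffProd y
      = diffProd x := by
  simp_rw [← prod_factorial_mul_det_choose]
  rw [← mul_sum, ← det_choose_eq_sum_det_choose hx, prod_range_succ]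
  ring

lemma strictMono_of_mem_piFinset_Ico {x : Fin (m + 1) → ℕ} (hx : Monotone x) {y : Fin m → ℕ}
    (hy : y ∈ Fintype.piFinset fun i : Fin m => Ico (x i.castSucc) (x i.succ)) : StrictMono y := by
  simp only [Fintype.mem_piFinset, mem_Ico] at hy
  intro i j hij
  calc y i < x i.succ := (hy i).2
    _ ≤ x j.castSucc := hx (Fin.succ_le_castSucc_iff.2 hij)
    _ ≤ y j := (hy j).1

end DiffProd

lemma sub_le_sub_of_strictMono {m : ℕ} {y : Fin m → ℕ} (hy : StrictMono y) (i j : Fin m) :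
    (j : ℕ) - i ≤ y j - y i := by
  rw [← Fin.card_Ico, ← Nat.card_Ico]
  refine card_le_card_of_injOn y (fun k hk => ?_) hy.injective.injOn
  rw [coe_Ico, Set.mem_Ico] at hk ⊢
  exact ⟨hy.monotone hk.1, hy hk.2⟩

lemma prod_comp_mul_prod_comp_eq_prod {ι κ α M : Type*} [CommMonoid M] {s : Finset ι}
    {t : Finset κ} {u : Finset α} {a : ι → α} {b : κ → α} (ha : Set.MapsTo a s u)
    (hb : Set.MapsTo b t u) (ha' : Set.InjOn a s) (hb' : Set.InjOn b t)
    (hab : ∀ i ∈ s, ∀ j ∈ t, a i ≠ b j) (hcard : #u = #s + #t) (f : α → M) :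
    (∏ i ∈ s, f (a i)) * ∏ j ∈ t, f (b j) = ∏ x ∈ u, f x := by
  classical
  have hdisj : Disjoint (s.image a) (t.image b) := by
    simpa [disjoint_left] using fun i hi j hj => (hab i hi j hj).symm
  have hunion : s.image a ∪ t.image b = u := by
    refine eq_of_subset_of_card_le
      (union_subset (image_subset_iff.2 ha) (image_subset_iff.2 hb)) ?_
    rw [card_union_of_disjoint hdisj, card_image_of_injOn ha', card_image_of_injOn hb', hcard]
  rw [← hunion, prod_union hdisj, prod_image ha', prod_image hb']

section BetaNumbers

variable {μ : YoungDiagram} {m n : ℕ}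

/-- The beta numbers of `μ` for `m` rows, the exponents in the bialternant formula for `s_μ`. The
rows are listed from the bottom up, so that the sequence is increasing. -/
def betaNumber (μ : YoungDiagram) (m : ℕ) (i : Fin m) : ℕ := μ.rowLen i.rev + i

lemma betaNumber_strictMono (μ : YoungDiagram) (m : ℕ) : StrictMono (betaNumber μ m) :=
  fun _ _ hij => add_lt_add_of_le_of_lt (μ.rowLen_anti _ _ (Fin.rev_le_rev.2 hij.le)) hij

lemma betaNumber_castSucc (μ : YoungDiagram) (i : Fin m) :
    betaNumber μ (m + 1) i.castSucc = μ.rowLen (i.rev + 1) + i := by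
  simp only [betaNumber, Fin.rev_castSucc, Fin.val_succ, Fin.val_castSucc]

lemma betaNumber_succ (μ : YoungDiagram) (i : Fin m) :
    betaNumber μ (m + 1) i.succ = μ.rowLen i.rev + i + 1 := by
  simp only [betaNumber, Fin.rev_succ, Fin.val_succ, Fin.val_castSucc, add_assoc]

lemma betaNumber_injOn (m : ℕ) : Set.InjOn (betaNumber · m) {μ | μ.colLen 0 ≤ m} := by
  intro μ hμ ν hν h
  refine eq_of_rowLen_eq fun i => ?_
  rcases lt_or_ge i m with hi | hi
  · simpa [betaNumber] using congrFun h (Fin.rev ⟨i, hi⟩)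
  · rw [rowLen_eq_zero_iff.2 (hμ.trans hi), rowLen_eq_zero_iff.2 (hν.trans hi)]

lemma exists_betaNumber_eq {y : Fin m → ℕ} (hy : StrictMono y) :
    ∃ μ : YoungDiagram, μ.colLen 0 ≤ m ∧ betaNumber μ m = y := by
  have hanti : Antitone fun i : Fin m => y i.rev - i.rev := fun i j hij => by
    have hrev : j.rev ≤ i.rev := Fin.rev_le_rev.2 hij
    have := hy.monotone hrev
    have := sub_le_sub_of_strictMono hy j.rev i.rev
    have : (j.rev : ℕ) ≤ i.rev := hrev
    dsimp only
    omega
  let μ := ofRowLens (List.ofFn fun i : Fin m => y i.rev - i.rev) hanti.sortedGE_ofFn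
  have hmem (i j : ℕ) : (i, j) ∈ μ ↔ ∃ h : i < m, j < y (Fin.rev ⟨i, h⟩) - Fin.rev ⟨i, h⟩ := by
    simp [μ, mem_ofRowLens]
  refine ⟨μ, le_of_not_gt fun hm => ?_, funext fun i => ?_⟩
  · exact ((hmem _ _).1 (mem_iff_lt_colLen.2 hm)).1.false
  · have hrow : μ.rowLen i.rev = y i - i :=
      rowLen_eq_of_forall_mem_iff fun j => by rw [hmem, exists_prop_of_true i.rev.isLt, Fin.rev_rev]
    have : (i : ℕ) - 0 ≤ y i - y ⟨0, i.pos⟩ := sub_le_sub_of_strictMono hy ⟨0, i.pos⟩ i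
    rw [betaNumber, hrow]
    omega

lemma betaNumber_lt (hμ : μ.rowLen 0 ≤ n) (i : Fin m) : betaNumber μ m i < m + n := by
  have := μ.rowLen_anti 0 i.rev (Nat.zero_le _)
  unfold betaNumber
  omega

lemma betaNumber_complement (n : ℕ) (μ : YoungDiagram) (i : Fin m) :
    betaNumber (complement m n μ) m i = n - μ.rowLen i + i := by
  rw [betaNumber, rowLen_complement n μ i.rev.isLt]
  congr 3
  simp only [Fin.val_rev]
  omega

lemma betaNumber_complement_ne_betaNumber_transpose (hμ : μ.rowLen 0 ≤ n) (i : Fin m) (j : Fin n) :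
    betaNumber (complement m n μ) m i ≠ betaNumber μ.transpose n j := by
  have hrow := μ.rowLen_anti 0 i (Nat.zero_le _)
  have hne := rowLen_add_colLen_ne μ i j.rev
  rw [betaNumber_complement, betaNumber, rowLen_transpose]
  simp only [Fin.val_rev] at hne ⊢
  omega

lemma diffProd_betaNumber_complement (hμ : μ.rowLen 0 ≤ n) :
    diffProd (betaNumber (complement m n μ) m) = diffProd (betaNumber μ m) := by
  refine diffProd_eq_of_add_rev_eq (N := m + n - 1) fun i => ?_
  have hrow := μ.rowLen_anti 0 i (Nat.zero_le _)
  rw [betaNumber_complement, betaNumber, Fin.rev_rev, Fin.val_rev]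
  omega

lemma prod_factorial_betaNumber_complement_mul_transpose (hμ : μ ≤ rect m n) :
    (∏ i, (betaNumber (complement m n μ) m i)!) * ∏ j, (betaNumber μ.transpose n j)!
      = ∏ x ∈ range (m + n), x ! := by
  have hrow := rowLen_zero_le_of_le_rect hμ
  refine prod_comp_mul_prod_comp_eq_prod (fun i _ => mem_coe.2 (mem_range.2 ?_))
    (fun j _ => mem_coe.2 (mem_range.2 ?_)) (betaNumber_strictMono _ m).injective.injOn
    (betaNumber_strictMono _ n).injective.injOn
    (fun i _ j _ => betaNumber_complement_ne_betaNumber_transpose hrow i j) (by simp) Nat.factorial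
  · exact betaNumber_lt (rowLen_zero_le_of_le_rect (complement_le_rect m n μ)) i
  · rw [add_comm m n]
    exact betaNumber_lt ((rowLen_transpose μ 0).trans_le (colLen_zero_le_of_le_rect hμ)) j

end BetaNumbers

section HookProd

variable {μ : YoungDiagram} {m : ℕ}

lemma hookProd_transpose (μ : YoungDiagram) : hookProd μ.transpose = hookProd μ :=
  prod_equiv (Equiv.prodComm ℕ ℕ) (by simp) (by simp [hookLength, add_comm])

lemma hookProd_eq_prod_rows (hμ : μ.colLen 0 ≤ m) :
    hookProd μ = ∏ i : Fin m, ∏ j ∈ range (μ.rowLen i), hookLength μ (i, j) := by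
  rw [hookProd,
    Fin.prod_univ_eq_prod_range (fun i => ∏ j ∈ range (μ.rowLen i), hookLength μ (i, j))]
  refine prod_finset_product' μ.cells (range m) (fun i => range (μ.rowLen i)) ?_
    (f := fun i j => hookLength μ (i, j))
  rintro ⟨i, j⟩
  have := rowLen_eq_zero_iff (μ := μ) (i := i)
  simp only [mem_cells, mem_iff_lt_rowLen, mem_range]
  omega

lemma hookLength_strictAntiOn (μ : YoungDiagram) (i : ℕ) :
    StrictAntiOn (fun j => hookLength μ (i, j)) (range (μ.rowLen i)) := by
  intro j hj k hk hjk
  have := μ.colLen_anti j k hjk.le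
  have := (lt_colLen_iff_lt_rowLen (μ := μ)).2 (mem_range.1 hk)
  simp only [coe_range, Set.mem_Iio] at hj hk
  simp only [hookLength]
  omega

lemma hookLength_mem_Ico (hμ : μ.colLen 0 ≤ m) (i : Fin m) {j : ℕ} (hj : j < μ.rowLen i.rev) :
    hookLength μ (i.rev, j) ∈ Ico 1 (betaNumber μ m i + 1) := by
  have := (μ.colLen_anti 0 j j.zero_le).trans hμ
  have := lt_colLen_iff_lt_rowLen.2 hj
  simp only [hookLength, betaNumber, mem_Ico, Fin.val_rev] at *
  omega

lemma hookLength_ne_betaNumber_sub {i k : Fin m} (hk : k < i) {j : ℕ} (hj : j < μ.rowLen i.rev) :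
    hookLength μ (i.rev, j) ≠ betaNumber μ m i - betaNumber μ m k := by
  have hne := rowLen_add_colLen_ne μ k.rev j
  have := betaNumber_strictMono μ m hk
  have := lt_colLen_iff_lt_rowLen.2 hj
  simp only [hookLength, betaNumber, Fin.val_rev] at *
  omega

lemma prod_hookLength_row_mul_prod_sub (hμ : μ.colLen 0 ≤ m) (i : Fin m) :
    (∏ j ∈ range (μ.rowLen i.rev), hookLength μ (i.rev, j)) *
      ∏ k ∈ Iio i, (betaNumber μ m i - betaNumber μ m k) = (betaNumber μ m i)! := by
  have hlt {k} (hk : k ∈ Iio i) := betaNumber_strictMono μ m (mem_Iio.1 hk)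
  rw [← prod_Ico_id_eq_factorial]
  refine prod_comp_mul_prod_comp_eq_prod (fun j hj => ?_) (fun k hk => ?_)
    (hookLength_strictAntiOn μ i.rev).injOn (fun k hk l hl h => ?_) (fun j hj k hk => ?_) ?_ id
  · exact hookLength_mem_Ico hμ i (mem_range.1 hj)
  · have := hlt hk
    simp only [coe_Ico, Set.mem_Ico]
    omega
  · have := hlt hk
    have := hlt hl
    exact (betaNumber_strictMono μ m).injective (by omega)
  · exact hookLength_ne_betaNumber_sub (mem_Iio.1 hk) (mem_range.1 hj)
  · rw [Nat.card_Ico, card_range, Fin.card_Iio, Nat.add_sub_cancel, betaNumber]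

theorem hookProd_mul_diffProd_betaNumber (hμ : μ.colLen 0 ≤ m) :
    hookProd μ * diffProd (betaNumber μ m) = ∏ i, ((betaNumber μ m i)! : ℤ) := by
  rw [hookProd_eq_prod_rows hμ, ← Equiv.prod_comp Fin.revPerm, diffProd, Nat.cast_prod,
    ← prod_mul_distrib]
  refine prod_congr rfl fun i _ => ?_
  rw [← prod_hookLength_row_mul_prod_sub hμ i, Nat.cast_mul, Nat.cast_prod _ (Iio i),
    Fin.revPerm_apply]
  congr 1
  exact prod_congr rfl fun k hk =>
    (Nat.cast_sub (betaNumber_strictMono μ m (mem_Iio.1 hk)).le).symm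

end HookProd

section Tableaux

variable {μ ν : YoungDiagram} {m : ℕ}

/-- The semistandard tableaux of shape `μ` counted by `ssytCount μ k`. -/
def boundedSsyt (μ : YoungDiagram) (k : ℕ) : Set (SemistandardYoungTableau μ) :=
  {T | ∀ i j, (i, j) ∈ μ → T i j < k}

lemma finite_boundedSsyt (μ : YoungDiagram) (k : ℕ) : (boundedSsyt μ k).Finite := by
  refine Set.Finite.of_injOn (f := fun T (c : μ.cells) => T c.1.1 c.1.2)
    (t := Set.univ.pi fun _ => Set.Iio k) ?_ ?_ (Set.Finite.pi fun _ => Set.finite_Iio k)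
  · exact fun T hT c _ => hT _ _ ((mem_cells _).1 c.2)
  · intro T _ T' _ h
    ext i j
    by_cases hc : (i, j) ∈ μ
    · exact congrFun h ⟨(i, j), (mem_cells _).2 hc⟩
    · rw [T.zeros hc, T'.zeros hc]

/-- The diagrams with at most `m` rows that are obtained from `μ` by removing a horizontal strip,
that is, at most one cell from each column. -/
def horizontalStrips (μ : YoungDiagram) (m : ℕ) : Set YoungDiagram :=
  {ν | ν.colLen 0 ≤ m ∧ ∀ i, μ.rowLen (i + 1) ≤ ν.rowLen i ∧ ν.rowLen i ≤ μ.rowLen i}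

lemma le_of_mem_horizontalStrips (h : ν ∈ horizontalStrips μ m) : ν ≤ μ := fun ⟨i, _⟩ hc =>
  mem_iff_lt_rowLen.2 ((mem_iff_lt_rowLen.1 hc).trans_le (h.2 i).2)

lemma mem_of_mem_horizontalStrips (h : ν ∈ horizontalStrips μ m) {i j : ℕ} (hc : (i + 1, j) ∈ μ) :
    (i, j) ∈ ν :=
  mem_iff_lt_rowLen.2 ((mem_iff_lt_rowLen.1 hc).trans_le (h.2 i).1)

lemma finite_horizontalStrips (μ : YoungDiagram) (m : ℕ) : (horizontalStrips μ m).Finite :=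
  (finite_Iic_youngDiagram μ).subset fun _ => le_of_mem_horizontalStrips

lemma bijOn_betaNumber_horizontalStrips (hμ : μ.colLen 0 ≤ m + 1) :
    Set.BijOn (betaNumber · m) (horizontalStrips μ m) (Fintype.piFinset fun i : Fin m =>
      Ico (betaNumber μ (m + 1) i.castSucc) (betaNumber μ (m + 1) i.succ)) := by
  refine ⟨fun ν hν => ?_, (betaNumber_injOn m).mono fun ν hν => hν.1, fun y hy => ?_⟩
  · simp only [mem_coe, Fintype.mem_piFinset, mem_Ico, betaNumber_castSucc, betaNumber_succ]
    intro i
    have := hν.2 i.rev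
    simp only [betaNumber]
    omega
  · obtain ⟨ν, hν, rfl⟩ := exists_betaNumber_eq
      (strictMono_of_mem_piFinset_Ico (betaNumber_strictMono μ (m + 1)).monotone hy)
    refine ⟨ν, ⟨hν, fun i => ?_⟩, rfl⟩
    simp only [mem_coe, Fintype.mem_piFinset, mem_Ico, betaNumber_castSucc, betaNumber_succ] at hy
    rcases lt_or_ge i m with hi | hi
    · have := hy (Fin.rev ⟨i, hi⟩)
      simp only [betaNumber, Fin.rev_rev] at this
      omega
    · rw [rowLen_eq_zero_iff.2 (hμ.trans (Nat.succ_le_succ hi)), rowLen_eq_zero_iff.2 (hν.trans hi)]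
      exact ⟨le_rfl, Nat.zero_le _⟩

/-- The shape formed by the entries of `T` that are less than `k`. -/
def sublevel (T : SemistandardYoungTableau μ) (k : ℕ) : YoungDiagram where
  cells := μ.cells.filter fun c => T c.1 c.2 < k
  isLowerSet := by
    rintro ⟨i, j⟩ ⟨i', j'⟩ ⟨hi, hj⟩ hc
    simp only [coe_filter, mem_cells, Set.mem_ofPred_eq] at hc ⊢
    have hcol : (i, j') ∈ μ := μ.up_left_mem le_rfl hj hc.1
    exact ⟨μ.up_left_mem hi hj hc.1,
      (T.col_weak hi hcol).trans_lt ((T.row_weak_of_le hj hc.1).trans_lt hc.2)⟩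

lemma mem_sublevel {T : SemistandardYoungTableau μ} {k i j : ℕ} :
    (i, j) ∈ sublevel T k ↔ (i, j) ∈ μ ∧ T i j < k := by
  rw [← mem_cells, sublevel, mem_filter, mem_cells]

lemma row_le_entry (T : SemistandardYoungTableau μ) {i j : ℕ} (h : (i, j) ∈ μ) : i ≤ T i j := by
  induction i with
  | zero => exact Nat.zero_le _
  | succ i ih =>
    exact (ih (μ.up_left_mem i.le_succ le_rfl h)).trans_lt (T.col_strict i.lt_succ_self h)

lemma sublevel_mem_horizontalStrips {T : SemistandardYoungTableau μ}
    (hT : T ∈ boundedSsyt μ (m + 1)) : sublevel T m ∈ horizontalStrips μ m := by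
  refine ⟨le_of_not_gt fun hm => ?_, fun i => ⟨?_, ?_⟩⟩
  · have hc := mem_sublevel.1 (mem_iff_lt_colLen.2 hm)
    exact (row_le_entry T hc.1).not_gt hc.2
  · refine rowLen_le_rowLen_of_forall_mem fun j hc => mem_sublevel.2 ⟨?_, ?_⟩
    · exact μ.up_left_mem i.le_succ le_rfl hc
    · exact (T.col_strict i.lt_succ_self hc).trans_le (Nat.lt_succ_iff.1 (hT _ _ hc))
  · exact rowLen_le_rowLen_of_forall_mem fun j hc => (mem_sublevel.1 hc).1

/-- The restriction of a tableau to a smaller shape. -/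
def restrictSsyt (hν : ν ≤ μ) (T : SemistandardYoungTableau μ) : SemistandardYoungTableau ν where
  entry i j := if (i, j) ∈ ν then T i j else 0
  row_weak' hj hc := by
    rw [if_pos hc, if_pos (ν.up_left_mem le_rfl hj.le hc)]
    exact T.row_weak hj (hν hc)
  col_strict' hi hc := by
    rw [if_pos hc, if_pos (ν.up_left_mem hi.le le_rfl hc)]
    exact T.col_strict hi (hν hc)
  zeros' hc := if_neg hc

lemma restrictSsyt_apply (hν : ν ≤ μ) (T : SemistandardYoungTableau μ) (i j : ℕ) :
    restrictSsyt hν T i j = if (i, j) ∈ ν then T i j else 0 := rfl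

/-- The extension of a tableau with entries less than `m` by a horizontal strip of entries `m`. -/
def extendSsyt (hν : ν ∈ horizontalStrips μ m) (T : SemistandardYoungTableau ν)
    (hT : T ∈ boundedSsyt ν m) : SemistandardYoungTableau μ where
  entry i j := if (i, j) ∈ ν then T i j else if (i, j) ∈ μ then m else 0
  row_weak' {i j₁ j₂} hj hc := by
    by_cases hc' : (i, j₂) ∈ ν
    · rw [if_pos hc', if_pos (ν.up_left_mem le_rfl hj.le hc')]
      exact T.row_weak hj hc'
    · rw [if_neg hc', if_pos hc, if_pos (μ.up_left_mem le_rfl hj.le hc)]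
      split_ifs with h
      · exact (hT _ _ h).le
      · exact le_rfl
  col_strict' {i₁ i₂ j} hi hc := by
    have hc₁ : (i₁, j) ∈ ν := mem_of_mem_horizontalStrips hν (μ.up_left_mem hi le_rfl hc)
    rw [if_pos hc₁, if_pos hc]
    split_ifs with h
    · exact T.col_strict hi h
    · exact hT _ _ hc₁
  zeros' hc := by rw [if_neg (mt (@le_of_mem_horizontalStrips _ _ _ hν _) hc), if_neg hc]

lemma extendSsyt_apply (hν : ν ∈ horizontalStrips μ m) (T : SemistandardYoungTableau ν)
    (hT : T ∈ boundedSsyt ν m) (i j : ℕ) :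
    extendSsyt hν T hT i j = if (i, j) ∈ ν then T i j else if (i, j) ∈ μ then m else 0 := rfl

lemma extendSsyt_mem_boundedSsyt (hν : ν ∈ horizontalStrips μ m) (T : SemistandardYoungTableau ν)
    (hT : T ∈ boundedSsyt ν m) : extendSsyt hν T hT ∈ boundedSsyt μ (m + 1) := by
  intro i j hc
  rw [extendSsyt_apply, if_pos hc]
  split_ifs with h
  · exact (hT _ _ h).trans m.lt_succ_self
  · exact m.lt_succ_self

lemma sublevel_extendSsyt (hν : ν ∈ horizontalStrips μ m) (T : SemistandardYoungTableau ν)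
    (hT : T ∈ boundedSsyt ν m) : sublevel (extendSsyt hν T hT) m = ν := by
  refine SetLike.ext fun ⟨i, j⟩ => ?_
  rw [mem_sublevel, extendSsyt_apply]
  by_cases hc : (i, j) ∈ ν
  · simp [hc, hT i j hc, le_of_mem_horizontalStrips hν hc]
  · simp +contextual [hc]

lemma restrictSsyt_extendSsyt (hν : ν ∈ horizontalStrips μ m) (T : SemistandardYoungTableau ν)
    (hT : T ∈ boundedSsyt ν m) :
    restrictSsyt (le_of_mem_horizontalStrips hν) (extendSsyt hν T hT) = T := by
  ext i j
  by_cases hc : (i, j) ∈ ν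
  · simp [restrictSsyt_apply, extendSsyt_apply, hc]
  · simp [restrictSsyt_apply, hc, T.zeros hc]

lemma entry_eq_of_notMem_sublevel {T : SemistandardYoungTableau μ} (hT : T ∈ boundedSsyt μ (m + 1))
    {i j : ℕ} (hc : (i, j) ∈ μ) (hc' : (i, j) ∉ sublevel T m) : T i j = m :=
  le_antisymm (Nat.lt_succ_iff.1 (hT i j hc)) (not_lt.1 fun h => hc' (mem_sublevel.2 ⟨hc, h⟩))

lemma restrictSsyt_injOn (hν : ν ≤ μ) :
    Set.InjOn (restrictSsyt hν) {T | T ∈ boundedSsyt μ (m + 1) ∧ sublevel T m = ν} := by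
  rintro T ⟨hT, hTν⟩ T' ⟨hT', hTν'⟩ h
  ext i j
  by_cases hc : (i, j) ∈ μ
  · by_cases hcν : (i, j) ∈ ν
    · have hentry : restrictSsyt hν T i j = restrictSsyt hν T' i j := by rw [h]
      rwa [restrictSsyt_apply, restrictSsyt_apply, if_pos hcν, if_pos hcν] at hentry
    · rw [entry_eq_of_notMem_sublevel hT hc (hTν ▸ hcν),
        entry_eq_of_notMem_sublevel hT' hc (hTν' ▸ hcν)]
  · rw [T.zeros hc, T'.zeros hc]

lemma bijOn_restrictSsyt (hν : ν ∈ horizontalStrips μ m) :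
    Set.BijOn (restrictSsyt (le_of_mem_horizontalStrips hν))
      {T | T ∈ boundedSsyt μ (m + 1) ∧ sublevel T m = ν} (boundedSsyt ν m) := by
  refine ⟨?_, restrictSsyt_injOn _, fun T hT => ⟨extendSsyt hν T hT,
    ⟨extendSsyt_mem_boundedSsyt hν T hT, sublevel_extendSsyt hν T hT⟩,
    restrictSsyt_extendSsyt hν T hT⟩⟩
  rintro T ⟨-, rfl⟩ i j hc
  rw [restrictSsyt_apply, if_pos hc]
  exact (mem_sublevel.1 hc).2

theorem ssytCount_succ (μ : YoungDiagram) (m : ℕ) :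
    ssytCount μ (m + 1) = ∑ ν ∈ (finite_horizontalStrips μ m).toFinset, ssytCount ν m := by
  classical
  change (boundedSsyt μ (m + 1)).ncard = _
  rw [Set.ncard_eq_toFinset_card _ (finite_boundedSsyt μ (m + 1)),
    card_eq_sum_card_fiberwise (f := (sublevel · m))
      (t := (finite_horizontalStrips μ m).toFinset)]
  · refine sum_congr rfl fun ν hν => ?_
    rw [← Set.ncard_coe_finset]
    simpa [ssytCount, boundedSsyt] using
      (bijOn_restrictSsyt ((Set.Finite.mem_toFinset _).1 hν)).ncard_eq
  · simpa [Set.MapsTo] using fun T => sublevel_mem_horizontalStrips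

lemma ssytCount_bot (k : ℕ) : ssytCount ⊥ k = 1 := by
  refine Set.ncard_eq_one.2 ⟨default, Set.eq_singleton_iff_unique_mem.2 ⟨?_, fun T _ => ?_⟩⟩
  · exact fun i j hc => absurd hc (notMem_bot _)
  · ext i j
    rw [T.zeros (notMem_bot _), SemistandardYoungTableau.zeros _ (notMem_bot _)]

theorem prod_factorial_mul_ssytCount (hμ : μ.colLen 0 ≤ m) :
    (∏ i ∈ range m, (i ! : ℤ)) * ssytCount μ m = diffProd (betaNumber μ m) := by
  induction m generalizing μ with
  | zero => simp [eq_bot_of_colLen_zero_eq_zero (Nat.le_zero.1 hμ), ssytCount_bot, diffProd]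
  | succ m ih =>
    have hbij := bijOn_betaNumber_horizontalStrips hμ
    calc (∏ i ∈ range (m + 1), (i ! : ℤ)) * ssytCount μ (m + 1)
        = m ! * ∑ ν ∈ (finite_horizontalStrips μ m).toFinset,
            (∏ i ∈ range m, (i ! : ℤ)) * ssytCount ν m := by
          rw [prod_range_succ, ssytCount_succ, Nat.cast_sum, ← mul_sum]
          ring
      _ = m ! * ∑ ν ∈ (finite_horizontalStrips μ m).toFinset, diffProd (betaNumber ν m) := by
          congr 1
          exact sum_congr rfl fun ν hν => ih ((Set.Finite.mem_toFinset _).1 hν).1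
      _ = m ! * ∑ y ∈ Fintype.piFinset fun i : Fin m =>
            Ico (betaNumber μ (m + 1) i.castSucc) (betaNumber μ (m + 1) i.succ), diffProd y := by
          congr 1
          refine sum_nbij (betaNumber · m) (fun ν hν => ?_) ?_ ?_ fun _ _ => rfl
          · exact hbij.mapsTo ((Set.Finite.mem_toFinset _).1 hν)
          · simpa using hbij.injOn
          · simpa using hbij.surjOn
      _ = diffProd (betaNumber μ (m + 1)) :=
          factorial_mul_sum_diffProd (betaNumber_strictMono μ (m + 1)).monotone

end Tableaux

theorem prod_factorial_mul_hookProd_ssyt {m n : ℕ} {μ : YoungDiagram} (hμ : μ ≤ rect m n) :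
    (∏ i ∈ range m, i !) * (∏ j ∈ range n, j !) *
      (hookProd μ * hookProd (complement m n μ) * ssytCount μ m * ssytCount μ.transpose n)
      = ∏ x ∈ range (m + n), x ! := by
  have hrow : μ.transpose.colLen 0 ≤ n := by simpa using rowLen_zero_le_of_le_rect hμ
  have hcount := prod_factorial_mul_ssytCount (colLen_zero_le_of_le_rect hμ)
  have hcount' := prod_factorial_mul_ssytCount hrow
  have hhook := hookProd_mul_diffProd_betaNumber
    (colLen_zero_le_of_le_rect (complement_le_rect m n μ))
  have hhook' := hookProd_mul_diffProd_betaNumber hrow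
  rw [diffProd_betaNumber_complement (rowLen_zero_le_of_le_rect hμ), ← hcount] at hhook
  rw [hookProd_transpose, ← hcount'] at hhook'
  rw [← prod_factorial_betaNumber_complement_mul_transpose hμ]
  zify
  rw [← hhook, ← hhook']
  ring

lemma complement_bot (m n : ℕ) : complement m n ⊥ = rect m n := by
  have hrow (i : ℕ) : (⊥ : YoungDiagram).rowLen i = 0 := rowLen_eq_of_forall_mem_iff (by simp)
  ext c
  simp [complement, rect, hrow]

/-- `H_λ · H_λ̄ · s_λ(1^m) · s_{λ'}(1^n) = H_{n^m}`. -/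
theorem hook_prod_ssyt_identity (m n : ℕ) (μ : YoungDiagram) (hμ : μ ≤ rect m n) :
    hookProd μ * hookProd (complement m n μ) * ssytCount μ m * ssytCount μ.transpose n
      = hookProd (rect m n) := by
  have hbot := prod_factorial_mul_hookProd_ssyt (bot_le : ⊥ ≤ rect m n)
  have htranspose : (⊥ : YoungDiagram).transpose = ⊥ := transposeOrderIso.map_bot
  have hhook : hookProd ⊥ = 1 := by simp [hookProd]
  rw [complement_bot, htranspose, hhook, ssytCount_bot, ssytCount_bot, one_mul, mul_one, mul_one]
    at hbot
  have hpos : 0 < (∏ i ∈ range m, i !) * ∏ j ∈ range n, j ! :=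
    Nat.mul_pos (prod_pos fun i _ => i.factorial_pos) (prod_pos fun j _ => j.factorial_pos)
  exact Nat.eq_of_mul_eq_mul_left hpos ((prod_factorial_mul_hookProd_ssyt hμ).trans hbot.symm)
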